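/- Let ξ be a probability vector of dimension k that has at least two distinct strictly positive entries (i.e., a nonuniform distribution of nonzero Schmidt coefficients). Then there exist probability vectors x, y of dimension 4 such that ¬(x ≺ y) but x⊗ξ ≺ y⊗ξ. In other words, every such ξ is a potential catalyst. -/

import Mathlib

/-- The sum of the `k` largest entries of a vector (equivalently, for vectors with
nonnegative entries, the maximum of `∑ i ∈ s, x i` over subsets `s` of cardinality at
most `k`; this also accounts for padding with zeros). -/
noncomputable def topSum {ι : Type*} [Fintype ι] [DecidableEq ι] (x : ι → ℝ) (k : ℕ) : ℝ :=
  ((Finset.univ : Finset ι).powerset.filter (fun s => s.card ≤ k)).sup'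
    ⟨∅, by simp⟩ (fun s => ∑ i ∈ s, x i)

/-- A probability vector: nonnegative entries summing to 1. -/
def IsProbVec {ι : Type*} [Fintype ι] (x : ι → ℝ) : Prop :=
  (∀ i, 0 ≤ x i) ∧ ∑ i, x i = 1

/-- `x ≺ y` (majorization, after padding with zeros to a common dimension): every partial
sum of the `k` largest entries of `x` is at most that of `y`, with equal total sums. -/
def PMaj {ι κ : Type*} [Fintype ι] [DecidableEq ι] [Fintype κ] [DecidableEq κ]
    (x : ι → ℝ) (y : κ → ℝ) : Prop :=
  (∀ k : ℕ, topSum x k ≤ topSum y k) ∧ (∑ i, x i = ∑ j, y j)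

/-- Tensor product of two vectors: `(x ⊗ y)_{(i,j)} = x_i y_j`. -/
def pvTensor {ι κ : Type*} (x : ι → ℝ) (y : κ → ℝ) : ι × κ → ℝ :=
  fun p => x p.1 * y p.2

/-- The gap `∑ (yᵢ - t)⁺ - ∑ (xᵢ - t)⁺` between the hinge sums of `y = (M - ε, 1, 1, ε)` and
`x = ((M + 1) / 2, (M + 1) / 2, 1 / 2, 1 / 2)`. -/
noncomputable def hingeGap (M ε t : ℝ) : ℝ :=
  (max (M - ε - t) 0 + max (1 - t) 0 + max (1 - t) 0 + max (ε - t) 0) -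
    (max ((M + 1) / 2 - t) 0 + max ((M + 1) / 2 - t) 0 + max (1 / 2 - t) 0 + max (1 / 2 - t) 0)

theorem neg_le_hingeGap {M ε t : ℝ} (hM : 3 ≤ M) (hε : 0 < ε) (hε' : ε ≤ 1 / 4) :
    -ε ≤ hingeGap M ε t := by
  unfold hingeGap
  rcases max_cases (M - ε - t) 0 with h1 | h1 <;> rcases max_cases (1 - t) 0 with h2 | h2 <;>
  rcases max_cases (ε - t) 0 with h3 | h3 <;> rcases max_cases ((M + 1) / 2 - t) 0 with h4 | h4 <;>
  rcases max_cases (1 / 2 - t) 0 with h5 | h5 <;> linarith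

theorem hingeGap_nonneg {M ε t : ℝ} (hM : 3 ≤ M) (hε : 0 < ε) (hε' : ε ≤ 1 / 4)
    (h : ε ≤ |t - 1|) : 0 ≤ hingeGap M ε t := by
  unfold hingeGap
  rcases le_abs.1 h with h | h <;>
  rcases max_cases (M - ε - t) 0 with h1 | h1 <;> rcases max_cases (1 - t) 0 with h2 | h2 <;>
  rcases max_cases (ε - t) 0 with h3 | h3 <;> rcases max_cases ((M + 1) / 2 - t) 0 with h4 | h4 <;>
  rcases max_cases (1 / 2 - t) 0 with h5 | h5 <;> linarith

theorem le_hingeGap {M ε δ t : ℝ} (hM : 3 ≤ M) (hε : 0 < ε) (hε' : ε ≤ 1 / 4) (hδ : ε ≤ δ)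
    (ht : 2 * δ ≤ t) (htM : t ≤ M - 2 * δ) (h : 2 * δ ≤ |t - 1|) : δ ≤ hingeGap M ε t := by
  unfold hingeGap
  rcases le_abs.1 h with h | h <;>
  rcases max_cases (M - ε - t) 0 with h1 | h1 <;> rcases max_cases (1 - t) 0 with h2 | h2 <;>
  rcases max_cases (ε - t) 0 with h3 | h3 <;> rcases max_cases ((M + 1) / 2 - t) 0 with h4 | h4 <;>
  rcases max_cases (1 / 2 - t) 0 with h5 | h5 <;> linarith

section Majorization

variable {ι κ : Type*} [Fintype ι] [DecidableEq ι] [Fintype κ] [DecidableEq κ]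

theorem sum_le_topSum (x : ι → ℝ) {k : ℕ} {s : Finset ι} (hs : s.card ≤ k) :
    ∑ i ∈ s, x i ≤ topSum x k :=
  Finset.le_sup' (fun s => ∑ i ∈ s, x i) (by simpa using hs)

theorem topSum_le_hinge (x : ι → ℝ) (k : ℕ) {t : ℝ} (ht : 0 ≤ t) :
    topSum x k ≤ k * t + ∑ i, max (x i - t) 0 := by
  refine Finset.sup'_le _ _ fun s hs => ?_
  have hs' : (s.card : ℝ) ≤ k := by exact_mod_cast (Finset.mem_filter.1 hs).2
  calc ∑ i ∈ s, x i ≤ ∑ i ∈ s, (t + max (x i - t) 0) :=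
        Finset.sum_le_sum fun i _ => by linarith [le_max_left (x i - t) 0]
    _ = s.card * t + ∑ i ∈ s, max (x i - t) 0 := by
        rw [Finset.sum_add_distrib, Finset.sum_const, nsmul_eq_mul]
    _ ≤ k * t + ∑ i, max (x i - t) 0 := by
        gcongr
        exact Finset.subset_univ s

theorem exists_top_finset (y : κ → ℝ) (k : ℕ) (hk : k ≤ Fintype.card κ) :
    ∃ s : Finset κ, s.card = k ∧ ∀ i ∈ s, ∀ j ∉ s, y j ≤ y i := by
  induction k with
  | zero => exact ⟨∅, by simp⟩
  | succ k ih =>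
    obtain ⟨s, hs, hmax⟩ := ih (by omega)
    have hne : sᶜ.Nonempty := by
      rw [← Finset.card_pos, Finset.card_compl]
      omega
    obtain ⟨m, hm, hm'⟩ := Finset.exists_max_image sᶜ y hne
    rw [Finset.mem_compl] at hm
    refine ⟨insert m s, by rw [Finset.card_insert_of_notMem hm, hs], fun i hi j hj => ?_⟩
    rw [Finset.mem_insert, not_or] at hj
    rcases Finset.mem_insert.1 hi with rfl | hi
    · exact hm' j (by simpa using hj.2)
    · exact hmax i hi j hj.2

theorem exists_hinge_le_topSum (y : κ → ℝ) (hy : ∀ i, 0 ≤ y i) {k : ℕ} (hk : 0 < k) :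
    ∃ t, 0 ≤ t ∧ k * t + ∑ i, max (y i - t) 0 ≤ topSum y k := by
  rcases le_total (Fintype.card κ) k with h | h
  · refine ⟨0, le_rfl, ?_⟩
    simpa [hy] using sum_le_topSum y (s := Finset.univ) (by simpa using h)
  · obtain ⟨s, hs, hmax⟩ := exists_top_finset y k h
    obtain ⟨m, hm, hmin⟩ := Finset.exists_min_image s y (Finset.card_pos.1 (by omega))
    refine ⟨y m, hy m, le_trans (le_of_eq ?_) (sum_le_topSum y hs.le)⟩
    rw [← Finset.sum_subset (Finset.subset_univ s)
        fun i _ hi => max_eq_right (by linarith [hmax m hm i hi]),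
      Finset.sum_congr rfl fun i hi => max_eq_left (sub_nonneg.2 (hmin i hi)),
      Finset.sum_sub_distrib, Finset.sum_const, nsmul_eq_mul, hs]
    ring

theorem PMaj.of_hinge {x : ι → ℝ} {y : κ → ℝ} (hy : ∀ i, 0 ≤ y i)
    (hsum : ∑ i, x i = ∑ j, y j)
    (h : ∀ t, 0 ≤ t → ∑ i, max (x i - t) 0 ≤ ∑ j, max (y j - t) 0) : PMaj x y := by
  refine ⟨fun k => ?_, hsum⟩
  rcases Nat.eq_zero_or_pos k with rfl | hk
  · refine Finset.sup'_le _ _ fun s hs => ?_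
    have hs' : s = ∅ := by simpa using hs
    simpa [hs'] using sum_le_topSum y (k := 0) (s := ∅) (by simp)
  · obtain ⟨t, ht, hyt⟩ := exists_hinge_le_topSum y hy hk
    linarith [topSum_le_hinge x k ht, h t ht]

end Majorization

/-- If `ξ j` is the least positive entry of `ξ`, the weighted sum of hinge gaps is nonnegative:
the entries near `t` cost at most `ε` in total, and one of two distinct entries makes up for it. -/
theorem sum_mul_hingeGap_nonneg {ι : Type*} [Fintype ι] {ξ : ι → ℝ} (hξ : IsProbVec ξ) {i j : ι}
    (hj : 0 < ξ j) (hij : ξ j < ξ i) (hmin : ∀ l, 0 < ξ l → ξ j ≤ ξ l) {M δ ε : ℝ}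
    (hM : M = 2 / ξ j + 1) (hδ : δ = ξ j * (ξ i - ξ j) / 8) (hε : ε = ξ j * δ) (t : ℝ) :
    0 ≤ ∑ l, ξ l * hingeGap M ε (t / ξ l) := by
  have hle : ∀ l, ξ l ≤ 1 := fun l =>
    hξ.2 ▸ Finset.single_le_sum (fun l _ => hξ.1 l) (Finset.mem_univ l)
  have hi1 := hle i
  have hj1 := hle j
  have hδ0 : 0 < δ := by rw [hδ]; have := sub_pos.2 hij; positivity
  have hδj : 8 * δ ≤ ξ j := by rw [hδ]; nlinarith
  have hε0 : 0 < ε := by rw [hε]; positivity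
  have hεδ : ε ≤ δ := by rw [hε]; nlinarith
  have hε4 : ε ≤ 1 / 4 := by linarith
  have hM3 : 3 ≤ M := by
    have : 2 ≤ 2 / ξ j := by rw [le_div_iff₀ hj]; linarith
    linarith
  by_cases hnear : ∃ l, 0 < ξ l ∧ |t / ξ l - 1| < ε
  · obtain ⟨l, hl, hlt⟩ := hnear
    rw [abs_lt] at hlt
    have hlj := hmin l hl
    have hl1 := hle l
    have ht_eq : t = t / ξ l * ξ l := by field_simp
    have ht_low : ξ j / 2 ≤ t := by nlinarith
    have ht_up : t ≤ 3 / 2 := by nlinarith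
    have hgood : ∃ m, ξ j ≤ ξ m ∧ 2 * δ ≤ |t / ξ m - 1| := by
      by_contra! hcon
      have h1 := abs_lt.1 (hcon i hij.le)
      have h2 := abs_lt.1 (hcon j le_rfl)
      have hi : 0 < ξ i := hj.trans hij
      have hdiff : t / ξ j - t / ξ i = t * (ξ i - ξ j) / (ξ i * ξ j) := by field_simp
      have : 4 * δ ≤ t / ξ j - t / ξ i := by
        rw [hdiff, le_div_iff₀ (by positivity)]
        have h3 : ξ i * ξ j ≤ 1 := by nlinarith
        nlinarith
      linarith
    obtain ⟨m, hm, hmt⟩ := hgood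
    have hm0 : 0 < ξ m := hj.trans_le hm
    have hgap : δ ≤ hingeGap M ε (t / ξ m) := by
      refine le_hingeGap hM3 hε0 hε4 hεδ ?_ ?_ hmt
      · rw [le_div_iff₀ hm0]
        nlinarith [hle m]
      · have : t / ξ m ≤ 2 / ξ j := by gcongr; linarith
        linarith
    have hterm : ∀ l, 0 ≤ ξ l * (hingeGap M ε (t / ξ l) + ε) := fun l =>
      mul_nonneg (hξ.1 l) (by linarith [neg_le_hingeGap (t := t / ξ l) hM3 hε0 hε4])
    have hsingle := Finset.single_le_sum (fun l _ => hterm l) (Finset.mem_univ m)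
    simp only [mul_add, Finset.sum_add_distrib, ← Finset.sum_mul, hξ.2] at hsingle
    nlinarith
  · push Not at hnear
    refine Finset.sum_nonneg fun l _ => ?_
    rcases (hξ.1 l).eq_or_lt with h | h
    · simp [← h]
    · exact mul_nonneg h.le (hingeGap_nonneg hM3 hε0 hε4 (hnear l h))

theorem max_div_mul_sub {S c t : ℝ} (a : ℝ) (hS : 0 < S) (hc : 0 < c) :
    max (a / S * c - t) 0 = c / S * max (a - S * t / c) 0 := by
  rw [mul_max_of_nonneg _ _ (by positivity), mul_zero]
  congr 1
  field_simp

theorem sum_pvTensor {ι κ : Type*} [Fintype ι] [Fintype κ] (x : ι → ℝ) (c : κ → ℝ) :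
    ∑ p, pvTensor x c p = (∑ i, x i) * ∑ j, c j := by
  simp only [pvTensor, Fintype.sum_prod_type, Finset.sum_mul_sum]

/-- Daftuar–Klimesh: any probability vector with at least two distinct strictly positive
entries is a potential catalyst, enabling some transformation between incomparable
probability vectors of dimension 4. -/
theorem nonuniform_is_potential_catalyst {k : ℕ} (ξ : Fin k → ℝ) (hξ : IsProbVec ξ)
    (h2 : ∃ i j, 0 < ξ i ∧ 0 < ξ j ∧ ξ i ≠ ξ j) :
    ∃ x y : Fin 4 → ℝ, IsProbVec x ∧ IsProbVec y ∧ ¬ PMaj x y ∧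
      PMaj (pvTensor x ξ) (pvTensor y ξ) := by
  obtain ⟨i₀, j₀, hi₀, hj₀, hne⟩ := h2
  obtain ⟨j, hj, hmin⟩ := Finset.exists_min_image (Finset.univ.filter fun l => 0 < ξ l) ξ
    ⟨i₀, by simpa using hi₀⟩
  simp only [Finset.mem_filter, Finset.mem_univ, true_and] at hj hmin
  obtain ⟨i, hij⟩ : ∃ i, ξ j < ξ i := by
    by_contra! hcon
    exact hne (((hcon i₀).antisymm (hmin i₀ hi₀)).trans ((hmin j₀ hj₀).antisymm (hcon j₀)))
  have hle : ∀ l, ξ l ≤ 1 := fun l =>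
    hξ.2 ▸ Finset.single_le_sum (fun l _ => hξ.1 l) (Finset.mem_univ l)
  have hi1 := hle i
  obtain ⟨M, hM⟩ : ∃ M, M = 2 / ξ j + 1 := ⟨_, rfl⟩
  obtain ⟨δ, hδ⟩ : ∃ δ, δ = ξ j * (ξ i - ξ j) / 8 := ⟨_, rfl⟩
  obtain ⟨ε, hε⟩ : ∃ ε, ε = ξ j * δ := ⟨_, rfl⟩
  have hδ0 : 0 < δ := by rw [hδ]; have := sub_pos.2 hij; positivity
  have hε0 : 0 < ε := by rw [hε]; positivity
  have hε1 : ε ≤ 1 := by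
    have : δ ≤ 1 := by rw [hδ]; nlinarith
    rw [hε]; nlinarith
  have hM3 : 3 ≤ M := by
    have : 2 ≤ 2 / ξ j := by rw [le_div_iff₀ hj]; linarith
    linarith
  have hS : 0 < M + 2 := by linarith
  let x : Fin 4 → ℝ := ![(M + 1) / 2 / (M + 2), (M + 1) / 2 / (M + 2), 1 / 2 / (M + 2),
    1 / 2 / (M + 2)]
  let y : Fin 4 → ℝ := ![(M - ε) / (M + 2), 1 / (M + 2), 1 / (M + 2), ε / (M + 2)]
  have hx : IsProbVec x := by
    refine ⟨fun i => ?_, ?_⟩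
    · fin_cases i <;> simp [x] <;> positivity
    · simp only [x, Fin.sum_univ_four, Matrix.cons_val]
      field_simp
      ring
  have hy : IsProbVec y := by
    refine ⟨fun i => ?_, ?_⟩
    · have : 0 ≤ M - ε := by linarith
      fin_cases i <;> simp [y] <;> positivity
    · simp only [y, Fin.sum_univ_four, Matrix.cons_val]
      field_simp
      ring
  refine ⟨x, y, hx, hy, fun hmaj => ?_, PMaj.of_hinge ?_ ?_ fun t _ => ?_⟩
  · have h1 := sum_le_topSum x (k := 2) (s := {0, 1}) (by simp)
    have h2 := topSum_le_hinge y 2 (t := 1 / (M + 2)) (by positivity)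
    have h3 := hmaj.1 2
    have h4 : 1 / (M + 2) ≤ (M - ε) / (M + 2) := by gcongr; linarith
    have h5 : ε / (M + 2) ≤ 1 / (M + 2) := by gcongr
    simp only [x, y, Fin.sum_univ_four, Matrix.cons_val, sub_self, max_self,
      max_eq_left (sub_nonneg.2 h4), max_eq_right (sub_nonpos.2 h5)] at h1 h2 h3
    rw [Finset.sum_pair (by decide)] at h1
    simp only [Matrix.cons_val] at h1
    have h6 : (M + 1) / 2 / (M + 2) + (M + 1) / 2 / (M + 2) =
        1 / (M + 2) + (M - ε) / (M + 2) + ε / (M + 2) := by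
      field_simp
      ring
    have h7 : 0 < ε / (M + 2) := by positivity
    push_cast at h2
    linarith
  · exact fun p => mul_nonneg (hy.1 _) (hξ.1 _)
  · rw [sum_pvTensor, sum_pvTensor, hx.2, hy.2]
  · have key := sum_mul_hingeGap_nonneg hξ hj hij hmin hM hδ hε ((M + 2) * t)
    rw [← sub_nonneg, Fintype.sum_prod_type_right, Fintype.sum_prod_type_right,
      ← Finset.sum_sub_distrib]
    refine (div_nonneg key hS.le).trans_eq ?_
    rw [Finset.sum_div]
    refine Finset.sum_congr rfl fun l _ => ?_
    rcases (hξ.1 l).eq_or_lt with h | h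
    · simp [← h, pvTensor]
    · simp only [pvTensor, Fin.sum_univ_four, x, y, Matrix.cons_val, max_div_mul_sub _ hS h,
        hingeGap]
      ring
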